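/- Let X be a simplicial set and let T : (Δ/X)ᵒᵖ ⥤ 𝒜 be a contravariant Gabriel–Zisman natural system with values in a cocomplete abelian category 𝒜. Then there is an isomorphism of chain complexes C_*(P_X, T) ≅ C^{GZ}_*(X, T), where C_*(P_X,T) is the alternating face map chain complex associated to the simplicial object Lan_{P_X^{op}}(T) : Δᵒᵖ ⥤ 𝒜 and C^{GZ}_*(X,T) is the Gabriel–Zisman chain complex of X with coefficients in T. In particular H_n(P_X, T) ≅ H_n^{GZ}(X, T) for all n. -/

import Mathlib

/-!
STATEMENT 4: For a simplicial set `X` and a contravariant Gabriel–Zisman natural system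
`T : (Δ/X)ᵒᵖ ⥤ 𝒜` with values in a cocomplete abelian category `𝒜`, there is an
isomorphism of chain complexes `C_*(P_X, T) ≅ C^{GZ}_*(X, T)`, where `C_*(P_X, T)` is the
alternating face map chain complex of the simplicial object `Lan_{P_Xᵒᵖ}(T)` and
`C^{GZ}_*(X, T)` is the Gabriel–Zisman chain complex.  In particular
`H_n(P_X, T) ≅ H_n^{GZ}(X, T)` for all `n`.
-/

open CategoryTheory CategoryTheory.Limits Opposite Simplicial

universe v u

namespace GZ

variable {𝒜 : Type u} [Category.{v} 𝒜] [HasColimits 𝒜]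

/-- The simplex category `Δ/X` of a simplicial set `X`, realized as the opposite of
the category of elements of `X`. -/
abbrev SimplexCat (X : SSet.{v}) : Type v := X.Elementsᵒᵖ

/-- The object of `Δ/X` corresponding to a simplex `σ ∈ X_n`. -/
abbrev elt (X : SSet.{v}) {n : SimplexCategoryᵒᵖ} (σ : X.obj n) : SimplexCat X :=
  op (X.elementsMk n σ)

/-- The morphism of `Δ/X` from `X(θ)(σ)` to `σ` determined by `θ`. -/
abbrev eltHom (X : SSet.{v}) {n m : SimplexCategoryᵒᵖ} (θ : n ⟶ m) (σ : X.obj n) :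
    elt X (X.map θ σ) ⟶ elt X σ :=
  Quiver.Hom.op (CategoryOfElements.homMk (X.elementsMk n σ) (X.elementsMk m (X.map θ σ)) θ rfl)

/-- The projection functor `P_X : Δ/X ⥤ Δ`. -/
def proj (X : SSet.{v}) : SimplexCat X ⥤ SimplexCategory :=
  (CategoryOfElements.π X).leftOp

instance (priority := 100) smallColimits : HasColimitsOfSize.{0, v} 𝒜 :=
  hasColimitsOfSizeShrink.{0, v, v, v} 𝒜

lemma corep_aux (X : SSet.{v}) (T : (SimplexCat X)ᵒᵖ ⥤ 𝒜) {u w : SimplexCategoryᵒᵖ}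
    (g : u ⟶ w) (σ : X.obj u) (b : X.obj w) (h : X.map g σ = b) :
    T.map ((Quiver.Hom.op (CategoryOfElements.homMk (X.elementsMk u σ)
          (X.elementsMk w b) g h)).op) ≫
        Sigma.ι (fun τ : X.obj w => T.obj (op (elt X τ))) b =
      T.map ((eltHom X g σ).op) ≫
        Sigma.ι (fun τ : X.obj w => T.obj (op (elt X τ))) (X.map g σ) := by
  subst h; rfl

/-- The simplicial replacement of a contravariant Gabriel–Zisman natural system
`T : (Δ/X)ᵒᵖ ⥤ 𝒜`: in degree `n` it is the coproduct `⊕_{σ ∈ X_n} T(σ)`. -/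
@[simps!]
noncomputable def corep (X : SSet.{v}) (T : (SimplexCat X)ᵒᵖ ⥤ 𝒜) : SimplicialObject 𝒜 where
  obj u := ∐ fun σ : X.obj u => T.obj (op (elt X σ))
  map {u v} θ := Sigma.desc fun σ : X.obj u =>
    T.map ((eltHom X θ σ).op) ≫ Sigma.ι (fun τ : X.obj v => T.obj (op (elt X τ))) (X.map θ σ)
  map_id u := by
    ext σ
    simp only [colimit.ι_desc, Cofan.mk_ι_app, Category.comp_id, op_id]
    have h : X.map (𝟙 u) σ = σ := by simp
    rw [← corep_aux X T (𝟙 u) σ σ h]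
    have e : (CategoryOfElements.homMk (X.elementsMk u σ) (X.elementsMk u σ)
        (𝟙 u) h) = 𝟙 _ := CategoryOfElements.ext X _ _ rfl
    rw [e, op_id, op_id, T.map_id, Category.id_comp]
  map_comp {u v w} θ θ' := by
    ext σ
    rw [← Category.assoc, colimit.ι_desc]
    simp only [Cofan.mk_ι_app, colimit.ι_desc, Category.assoc, colimit.ι_desc_assoc]
    rw [← Category.assoc, ← T.map_comp, ← op_comp]
    have h : X.map (θ ≫ θ') σ = X.map θ' (X.map θ σ) := by
      rw [FunctorToTypes.map_comp_apply]
    rw [← corep_aux X T (θ ≫ θ') σ _ h]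
    congr 1

end GZ

namespace GZ

variable {𝒜 : Type u} [Category.{v} 𝒜] [HasColimits 𝒜]

/-- The Gabriel–Zisman chain complex `C^{GZ}_*(X, T)`: its `n`-th term is
`⊕_{σ ∈ X_n} T(σ)` and its differential is the alternating sum of the coface-induced maps. -/
noncomputable def chainComplexGZ [Preadditive 𝒜] (X : SSet.{v})
    (T : (SimplexCat X)ᵒᵖ ⥤ 𝒜) : ChainComplex 𝒜 ℕ :=
  (AlgebraicTopology.alternatingFaceMapComplex 𝒜).obj (corep X T)

end GZ

namespace GZ

variable {𝒜 : Type u} [Category.{v} 𝒜] [HasColimits 𝒜]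

/-- The unit exhibiting `corep X T` as a left Kan extension. -/
noncomputable def corepUnit (X : SSet.{v}) (T : (SimplexCat X)ᵒᵖ ⥤ 𝒜) :
    T ⟶ (proj X).op ⋙ corep X T where
  app x := Sigma.ι (fun τ : X.obj x.unop.unop.1 => T.obj (op (elt X τ))) x.unop.unop.2
  naturality x y f := by
    refine (corep_aux X T f.unop.unop.1 x.unop.unop.2 y.unop.unop.2 f.unop.unop.2).trans ?_
    symm
    exact colimit.ι_desc _ _

lemma corepDesc_aux (X : SSet.{v}) (T : (SimplexCat X)ᵒᵖ ⥤ 𝒜)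
    (G : SimplicialObject 𝒜)
    (b : ∀ (u : SimplexCategoryᵒᵖ) (σ : X.obj u), T.obj (op (elt X σ)) ⟶ G.obj u)
    {u w : SimplexCategoryᵒᵖ} (θ : u ⟶ w)
    (h : ∀ σ : X.obj u, T.map (eltHom X θ σ).op ≫ b w (X.map θ σ) = b u σ ≫ G.map θ) :
    (Sigma.desc fun σ : X.obj u =>
      T.map ((eltHom X θ σ).op) ≫
        Sigma.ι (fun τ : X.obj w => T.obj (op (elt X τ))) (X.map θ σ)) ≫ Sigma.desc (b w) =
      Sigma.desc (b u) ≫ G.map θ := by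
  refine Sigma.hom_ext _ _ fun σ => ?_
  rw [← Category.assoc, Sigma.ι_desc, Category.assoc, Sigma.ι_desc, ← Category.assoc,
    Sigma.ι_desc, h]

/-- The map out of `corep X T` induced by the universal property. -/
noncomputable def corepDesc (X : SSet.{v}) (T : (SimplexCat X)ᵒᵖ ⥤ 𝒜)
    (G : SimplicialObject 𝒜) (β : T ⟶ (proj X).op ⋙ G) : corep X T ⟶ G where
  app u := Sigma.desc fun σ : X.obj u => β.app (op (elt X σ))
  naturality u w θ :=
    corepDesc_aux X T G (fun _ σ => β.app (op (elt X σ))) θ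
      (fun σ => β.naturality (eltHom X θ σ).op)

lemma corepUnit_desc (X : SSet.{v}) (T : (SimplexCat X)ᵒᵖ ⥤ 𝒜)
    (G : SimplicialObject 𝒜) (β : T ⟶ (proj X).op ⋙ G) :
    corepUnit X T ≫ Functor.whiskerLeft (proj X).op (corepDesc X T G β) = β := by
  ext x
  exact colimit.ι_desc _ _

lemma corep_hom_ext (X : SSet.{v}) (T : (SimplexCat X)ᵒᵖ ⥤ 𝒜)
    (G : SimplicialObject 𝒜) (a b : corep X T ⟶ G)
    (h : corepUnit X T ≫ Functor.whiskerLeft (proj X).op a =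
      corepUnit X T ≫ Functor.whiskerLeft (proj X).op b) : a = b := by
  refine NatTrans.ext (funext fun u => Sigma.hom_ext _ _ fun σ => ?_)
  exact congrArg (fun k => k.app (op (elt X σ))) h

lemma corep_isLeftKanExtension (X : SSet.{v}) (T : (SimplexCat X)ᵒᵖ ⥤ 𝒜) :
    Functor.IsLeftKanExtension (corep X T) (corepUnit X T) where
  nonempty_isUniversal := ⟨IsInitial.ofUniqueHom
    (fun Y => StructuredArrow.homMk (corepDesc X T Y.right Y.hom)
      (corepUnit_desc X T Y.right Y.hom))
    (fun Y m => by
      apply StructuredArrow.ext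
      apply corep_hom_ext
      exact (StructuredArrow.w m).trans (corepUnit_desc X T Y.right Y.hom).symm)⟩

end GZ

open GZ in
theorem stmt_4 {𝒜 : Type u} [Category.{v} 𝒜] [Abelian 𝒜] [HasColimits 𝒜]
    (X : SSet.{v}) (T : (SimplexCat X)ᵒᵖ ⥤ 𝒜) :
    Nonempty ((AlgebraicTopology.alternatingFaceMapComplex 𝒜).obj
        ((proj X).op.pointwiseLeftKanExtension T) ≅ chainComplexGZ X T) ∧
    ∀ n : ℕ,
      Nonempty ((((AlgebraicTopology.alternatingFaceMapComplex 𝒜).obj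
          ((proj X).op.pointwiseLeftKanExtension T)).homology n) ≅
        (chainComplexGZ X T).homology n) := by
  haveI := corep_isLeftKanExtension X T
  let e : (proj X).op.pointwiseLeftKanExtension T ≅ corep X T :=
    Functor.leftKanExtensionUnique _ ((proj X).op.pointwiseLeftKanExtensionUnit T) _
      (corepUnit X T)
  let e' : (AlgebraicTopology.alternatingFaceMapComplex 𝒜).obj
        ((proj X).op.pointwiseLeftKanExtension T) ≅ chainComplexGZ X T :=
    (AlgebraicTopology.alternatingFaceMapComplex 𝒜).mapIso e
  exact ⟨⟨e'⟩, fun n => ⟨(HomologicalComplex.homologyFunctor 𝒜 _ n).mapIso e'⟩⟩
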